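/- arXiv:2104.05962 — 2 statements merged into one kernel-verified Lean document; each statement's English description precedes it below -/
import Mathlib

section
/- Let Λ and C be finite non-empty sets and let m* be a positive integer satisfying property (⊕). Then hj_C(1,Λ) ≤ f^{8,*}_Λ(m*, C). -/
open Finset

/-- `ν` belongs to the subspace `S(⟨Ms ℓ : ℓ < m⟩, ρ)` of `U_{Fin k, Λ}`: it agrees with `ρ`
off the blocks and is constant on each block `Ms ℓ`. -/
def InSubspace {Λ : Type*} {k m : ℕ} (Ms : Fin m → Finset (Fin k))
    (ρ : Fin k → Λ) (ν : Fin k → Λ) : Prop :=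
  (∀ t : Fin k, (∀ ℓ, t ∉ Ms ℓ) → ν t = ρ t) ∧
    ∀ ℓ : Fin m, ∃ a : Λ, ∀ t ∈ Ms ℓ, ν t = a

/-- The number of blocks `Ms ℓ` on which `ν` is constantly `α`. -/
def blockCount {Λ : Type*} [DecidableEq Λ] {k m : ℕ} (Ms : Fin m → Finset (Fin k))
    (ν : Fin k → Λ) (α : Λ) : ℕ :=
  (Finset.univ.filter fun ℓ : Fin m => ∀ t ∈ Ms ℓ, ν t = α).card

/-- `k` is large enough for the `m`-dimensional Hales-Jewett property: every `C`-coloring of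
`U_{Fin k, Λ}` admits a monochromatic `m`-dimensional subspace. -/
def HJProp (Λ C : Type*) (m k : ℕ) : Prop :=
  ∀ d : (Fin k → Λ) → C,
    ∃ (Ms : Fin m → Finset (Fin k)) (ρ : Fin k → Λ),
      (∀ ℓ, (Ms ℓ).Nonempty) ∧
      (∀ ℓ₁ ℓ₂, ℓ₁ ≠ ℓ₂ → Disjoint (Ms ℓ₁) (Ms ℓ₂)) ∧
      ∃ c : C, ∀ ν, InSubspace Ms ρ ν → d ν = c

/-- The Hales-Jewett number `hj_C(m, Λ)`. -/
noncomputable def hjNum (Λ C : Type*) (m : ℕ) : ℕ := sInf {k | HJProp Λ C m k}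

/-- Like `HJProp`, but the blocks of the monochromatic subspace all have the same size. -/
def HJEqProp (Λ C : Type*) (m k : ℕ) : Prop :=
  ∀ d : (Fin k → Λ) → C,
    ∃ (Ms : Fin m → Finset (Fin k)) (ρ : Fin k → Λ),
      (∀ ℓ, (Ms ℓ).Nonempty) ∧
      (∀ ℓ₁ ℓ₂, ℓ₁ ≠ ℓ₂ → Disjoint (Ms ℓ₁) (Ms ℓ₂)) ∧
      (∀ ℓ₁ ℓ₂, (Ms ℓ₁).card = (Ms ℓ₂).card) ∧
      ∃ c : C, ∀ ν, InSubspace Ms ρ ν → d ν = c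

/-- The number `hj^=_C(m, Λ)`. -/
noncomputable def hjEqNum (Λ C : Type*) (m : ℕ) : ℕ := sInf {k | HJEqProp Λ C m k}

/-- The partition property underlying `f^8_Λ(m, C)`: `d` is constant on the set of members
`ν` of the subspace realizing each letter `α` on exactly `m / |Λ|` many blocks. -/
def F8Prop (Λ C : Type*) [Fintype Λ] [DecidableEq Λ] (m k : ℕ) : Prop :=
  ∀ d : (Fin k → Λ) → C,
    ∃ (Ms : Fin m → Finset (Fin k)) (ρ : Fin k → Λ),
      (∀ ℓ, (Ms ℓ).Nonempty) ∧
      (∀ ℓ₁ ℓ₂, ℓ₁ ≠ ℓ₂ → Disjoint (Ms ℓ₁) (Ms ℓ₂)) ∧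
      ∃ c : C, ∀ ν, InSubspace Ms ρ ν →
        (∀ α : Λ, blockCount Ms ν α = m / Fintype.card Λ) → d ν = c

/-- Shelah's number `f^8_Λ(m, C)`. -/
noncomputable def f8 (Λ C : Type*) [Fintype Λ] [DecidableEq Λ] (m : ℕ) : ℕ :=
  sInf {k | F8Prop Λ C m k}

/-- As `F8Prop`, but with all blocks of the same size. -/
def F9Prop (Λ C : Type*) [Fintype Λ] [DecidableEq Λ] (m k : ℕ) : Prop :=
  ∀ d : (Fin k → Λ) → C,
    ∃ (Ms : Fin m → Finset (Fin k)) (ρ : Fin k → Λ),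
      (∀ ℓ, (Ms ℓ).Nonempty) ∧
      (∀ ℓ₁ ℓ₂, ℓ₁ ≠ ℓ₂ → Disjoint (Ms ℓ₁) (Ms ℓ₂)) ∧
      (∀ ℓ₁ ℓ₂, (Ms ℓ₁).card = (Ms ℓ₂).card) ∧
      ∃ c : C, ∀ ν, InSubspace Ms ρ ν →
        (∀ α : Λ, blockCount Ms ν α = m / Fintype.card Λ) → d ν = c

/-- Shelah's number `f^9_Λ(m, C)`: the minimal `k` divisible by `|Λ|` with `F9Prop`. -/
noncomputable def f9 (Λ C : Type*) [Fintype Λ] [DecidableEq Λ] (m : ℕ) : ℕ :=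
  sInf {k | Fintype.card Λ ∣ k ∧ F9Prop Λ C m k}

/-- The partition property underlying `f^{8,*}_Λ(m, C)`: any two members of the subspace
realizing each letter on the same number of blocks get the same color. -/
def F8StarProp (Λ C : Type*) [DecidableEq Λ] (m k : ℕ) : Prop :=
  ∀ d : (Fin k → Λ) → C,
    ∃ (Ms : Fin m → Finset (Fin k)) (ρ : Fin k → Λ),
      (∀ ℓ, (Ms ℓ).Nonempty) ∧
      (∀ ℓ₁ ℓ₂, ℓ₁ ≠ ℓ₂ → Disjoint (Ms ℓ₁) (Ms ℓ₂)) ∧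
      ∀ ν₁ ν₂, InSubspace Ms ρ ν₁ → InSubspace Ms ρ ν₂ →
        (∀ α : Λ, blockCount Ms ν₁ α = blockCount Ms ν₂ α) → d ν₁ = d ν₂

/-- Shelah's number `f^{8,*}_Λ(m, C)`. -/
noncomputable def f8Star (Λ C : Type*) [DecidableEq Λ] (m : ℕ) : ℕ :=
  sInf {k | F8StarProp Λ C m k}

/-- As `F8StarProp`, but with all blocks of the same size. -/
def F9StarProp (Λ C : Type*) [DecidableEq Λ] (m k : ℕ) : Prop :=
  ∀ d : (Fin k → Λ) → C,
    ∃ (Ms : Fin m → Finset (Fin k)) (ρ : Fin k → Λ),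
      (∀ ℓ, (Ms ℓ).Nonempty) ∧
      (∀ ℓ₁ ℓ₂, ℓ₁ ≠ ℓ₂ → Disjoint (Ms ℓ₁) (Ms ℓ₂)) ∧
      (∀ ℓ₁ ℓ₂, (Ms ℓ₁).card = (Ms ℓ₂).card) ∧
      ∀ ν₁ ν₂, InSubspace Ms ρ ν₁ → InSubspace Ms ρ ν₂ →
        (∀ α : Λ, blockCount Ms ν₁ α = blockCount Ms ν₂ α) → d ν₁ = d ν₂

/-- Shelah's number `f^{9,*}_Λ(m, C)`: the minimal `k` divisible by `|Λ|` with `F9StarProp`. -/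
noncomputable def f9Star (Λ C : Type*) [Fintype Λ] [DecidableEq Λ] (m : ℕ) : ℕ :=
  sInf {k | Fintype.card Λ ∣ k ∧ F9StarProp Λ C m k}

/-- As `F9StarProp`, but with all blocks of size exactly `n`. -/
def F9StarFixedProp (Λ C : Type*) [DecidableEq Λ] (n m k : ℕ) : Prop :=
  ∀ d : (Fin k → Λ) → C,
    ∃ (Ms : Fin m → Finset (Fin k)) (ρ : Fin k → Λ),
      (∀ ℓ, (Ms ℓ).card = n) ∧
      (∀ ℓ₁ ℓ₂, ℓ₁ ≠ ℓ₂ → Disjoint (Ms ℓ₁) (Ms ℓ₂)) ∧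
      ∀ ν₁ ν₂, InSubspace Ms ρ ν₁ → InSubspace Ms ρ ν₂ →
        (∀ α : Λ, blockCount Ms ν₁ α = blockCount Ms ν₂ α) → d ν₁ = d ν₂

/-- Shelah's number `f^{9,*}_{Λ,n}(m, C)`. -/
noncomputable def f9StarFixed (Λ C : Type*) [Fintype Λ] [DecidableEq Λ] (n m : ℕ) : ℕ :=
  sInf {k | Fintype.card Λ ∣ k ∧ F9StarFixedProp Λ C n m k}

/-- The partition property underlying `f^{13}_Λ(m, C)`: there is an `m`-element set `N` and
`ρ` on its complement such that any two extensions of `ρ` realizing each letter equally often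
on `N` get the same color. -/
def F13Prop (Λ C : Type*) [DecidableEq Λ] (m k : ℕ) : Prop :=
  ∀ d : (Fin k → Λ) → C,
    ∃ N : Finset (Fin k), N.card = m ∧
      ∃ ρ : Fin k → Λ, ∀ η₁ η₂ : Fin k → Λ,
        (∀ t ∉ N, η₁ t = ρ t) → (∀ t ∉ N, η₂ t = ρ t) →
        (∀ α : Λ, (N.filter fun t => η₁ t = α).card = (N.filter fun t => η₂ t = α).card) →
        d η₁ = d η₂

/-- The number `f^{13}_Λ(m, C)` of Golshani-Shelah. -/
noncomputable def f13 (Λ C : Type*) [DecidableEq Λ] (m : ℕ) : ℕ :=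
  sInf {k | F13Prop Λ C m k}

/-- The Gallai-Witt property: every `C`-coloring of `U_{h,n}` (the `h`-tuples of numbers
below `n`) is constant on a homothetic copy `{⟨m_e + d'⬝i_e : e < h⟩ : i_0, …, i_{h-1} ≤ m}`
of the cube `{0, …, m}^h`. -/
def GWProp (C : Type*) (h m n : ℕ) : Prop :=
  ∀ d : (Fin h → Fin n) → C,
    ∃ d' : ℕ, 0 < d' ∧ ∃ ms : Fin h → ℕ,
      (∀ e, ms e + d' * m < n) ∧
      ∃ c : C, ∀ i : Fin h → ℕ, (∀ e, i e ≤ m) →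
        ∀ hlt : ∀ e, ms e + d' * i e < n,
          d (fun e => ⟨ms e + d' * i e, hlt e⟩) = c

/-- The Gallai-Witt number `w_C(h, m)`. -/
noncomputable def gwNum (C : Type*) (h m : ℕ) : ℕ := sInf {n | GWProp C h m n}

/-- The van der Waerden property: every coloring of `{0, …, N-1}` with `r` colors contains a
monochromatic arithmetic progression of length `m` (with positive common difference). -/
def VDWProp (r m N : ℕ) : Prop :=
  ∀ d : Fin N → Fin r,
    ∃ a dd : ℕ, 0 < dd ∧ (∀ i < m, a + i * dd < N) ∧
      ∃ c : Fin r, ∀ i : ℕ, i < m → ∀ h : a + i * dd < N, d ⟨a + i * dd, h⟩ = c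

/-- The van der Waerden number `w(r, m)`. -/
noncomputable def vdwNum (r m : ℕ) : ℕ := sInf {N | VDWProp r m N}

/-- The coloring `d` of `U_{Fin k, Λ}` admits a monochromatic (combinatorial) line. -/
def HasMonoLine {Λ C : Type*} {k : ℕ} (d : (Fin k → Λ) → C) : Prop :=
  ∃ N : Finset (Fin k), N.Nonempty ∧ ∃ ρ : Fin k → Λ, ∃ c : C,
    ∀ η : Fin k → Λ, (∀ t ∉ N, η t = ρ t) → (∃ a : Λ, ∀ t ∈ N, η t = a) → d η = c

/-- Property `(⊕)` for `m*`: for every `C`-coloring `d` of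
`Ω = {⟨ℓ_α : α ∈ Λ⟩ : Σ_α ℓ_α = m*}` there are `ℓ* > 0` and `⟨ℓ*_α : α ∈ Λ⟩` such that all the
tuples `ℓ̄^α` (obtained from `⟨ℓ*_β⟩` by increasing the `α`-entry by `ℓ*`) lie in `Ω` and get
the same color. -/
def OplusProp (Λ C : Type*) [Fintype Λ] [DecidableEq Λ] (mstar : ℕ) : Prop :=
  ∀ d : (Λ → ℕ) → C,
    ∃ lstar : ℕ, 0 < lstar ∧ ∃ ls : Λ → ℕ,
      (∀ α : Λ, (∑ β : Λ, Function.update ls α (ls α + lstar) β) = mstar) ∧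
      ∃ c : C, ∀ α : Λ, d (Function.update ls α (ls α + lstar)) = c

theorem exists_f8StarProp (Λ C : Type*) [Fintype Λ] [DecidableEq Λ] [Nonempty Λ]
    [Fintype C] (m : ℕ) : ∃ k, F8StarProp Λ C m k := by
  classical
  obtain ⟨n, hn⟩ := Combinatorics.Subspace.exists_mono_in_high_dimension_fin Λ C (Fin m)
  refine ⟨n, fun d => ?_⟩
  obtain ⟨l, c, hc⟩ := hn d
  obtain ⟨a0⟩ := (inferInstance : Nonempty Λ)
  let Ms : Fin m → Finset (Fin n) := fun ℓ => Finset.univ.filter fun i => l.idxFun i = Sum.inr ℓ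
  let ρ : Fin n → Λ := fun i => (l.idxFun i).elim id (fun _ => a0)
  have key : ∀ ν, InSubspace Ms ρ ν → d ν = c := by
    intro ν hν
    obtain ⟨h1, h2⟩ := hν
    choose x hx using h2
    rw [← hc x]
    congr 1
    funext i
    rw [Combinatorics.Subspace.apply_def]
    cases hi : l.idxFun i with
    | inl a =>
      rw [h1 i (by simp [Ms, hi])]
      simp [ρ, hi]
    | inr e =>
      rw [hx e i (by simp [Ms, hi])]
      simp
  refine ⟨Ms, ρ, ?_, ?_, ?_⟩
  · intro ℓ
    obtain ⟨i, hi⟩ := l.proper ℓ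
    exact ⟨i, by simp [Ms, hi]⟩
  · intro ℓ₁ ℓ₂ hne
    rw [Finset.disjoint_left]
    intro i h1 h2
    simp only [Ms, Finset.mem_filter, Finset.mem_univ, true_and] at h1 h2
    rw [h1] at h2
    exact hne (Sum.inr.inj h2)
  · intro ν₁ ν₂ h1 h2 _
    rw [key ν₁ h1, key ν₂ h2]

theorem exists_fiber_map {Λ : Type*} [Fintype Λ] [DecidableEq Λ] (m r : ℕ) (ls : Λ → ℕ)
    (h : r + ∑ β, ls β = m) :
    ∃ g : Fin m → Option Λ, (Finset.univ.filter fun ℓ => g ℓ = none).card = r ∧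
      ∀ α, (Finset.univ.filter fun ℓ => g ℓ = some α).card = ls α := by
  classical
  let T := Σ o : Option Λ, Fin (o.elim r ls)
  have hT : Fintype.card (Fin m) = Fintype.card T := by
    simp [T, Fintype.sum_option, h]
  let e : Fin m ≃ T := Fintype.equivOfCardEq hT
  have hfib : ∀ o : Option Λ, (Finset.univ.filter fun ℓ => (e ℓ).1 = o).card = o.elim r ls := by
    intro o
    rw [← Fintype.card_subtype]
    have e1 : {ℓ // (e ℓ).1 = o} ≃ {t : T // t.1 = o} :=
      e.subtypeEquiv (fun _ => Iff.rfl)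
    have e2 : {t : T // t.1 = o} ≃ Fin (o.elim r ls) :=
      Equiv.sigmaSubtype o
    rw [Fintype.card_congr (e1.trans e2), Fintype.card_fin]
  exact ⟨fun ℓ => (e ℓ).1, hfib none, fun α => hfib (some α)⟩

theorem card_getD {Λ : Type*} [DecidableEq Λ] {m : ℕ} (g : Fin m → Option Λ) (r : ℕ)
    (ls : Λ → ℕ) (h0 : (Finset.univ.filter fun ℓ => g ℓ = none).card = r)
    (h1 : ∀ α, (Finset.univ.filter fun ℓ => g ℓ = some α).card = ls α) (a α : Λ) :
    (Finset.univ.filter fun ℓ => (g ℓ).getD a = α).card =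
      Function.update ls a (ls a + r) α := by
  by_cases h : α = a
  · subst h
    rw [Function.update_self, ← h0, ← h1 α, ← Finset.card_union_of_disjoint]
    · congr 1
      ext ℓ
      cases hg : g ℓ <;> simp [hg]
    · rw [Finset.disjoint_left]
      intro ℓ
      simp +contextual
  · rw [Function.update_of_ne h, ← h1 α]
    congr 1
    ext ℓ
    cases hg : g ℓ <;> simp [hg, Ne.symm h]

theorem hjProp_of_f8StarProp (Λ C : Type*) [Fintype Λ] [DecidableEq Λ] [Nonempty Λ]
    [Nonempty C] (m k : ℕ) (hoplus : OplusProp Λ C m) (hk : F8StarProp Λ C m k) :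
    HJProp Λ C 1 k := by
  classical
  intro d
  obtain ⟨Ms, ρ, hne, hdisj, hd⟩ := hk d
  obtain ⟨c0⟩ := (inferInstance : Nonempty C)
  obtain ⟨a0⟩ := (inferInstance : Nonempty Λ)
  let d' : (Λ → ℕ) → C := fun l =>
    if h : ∃ ν, InSubspace Ms ρ ν ∧ ∀ α, blockCount Ms ν α = l α then d h.choose else c0
  have hd' : ∀ ν l, InSubspace Ms ρ ν → (∀ α, blockCount Ms ν α = l α) → d ν = d' l := by
    intro ν l h1 h2
    have h : ∃ ν, InSubspace Ms ρ ν ∧ ∀ α, blockCount Ms ν α = l α := ⟨ν, h1, h2⟩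
    simp only [d', dif_pos h]
    exact hd _ _ h1 h.choose_spec.1 (fun α => by rw [h2, h.choose_spec.2])
  obtain ⟨r, hr, ls, hsum, c, hc⟩ := hoplus d'
  have hm : r + ∑ β, ls β = m := by
    rw [← hsum a0, Finset.sum_update_of_mem (Finset.mem_univ a0),
      ← Finset.add_sum_erase _ ls (Finset.mem_univ a0), Finset.sdiff_singleton_eq_erase]
    ring
  obtain ⟨g, hg0, hg1⟩ := exists_fiber_map m r ls hm
  have huniq : ∀ t ℓ₁ ℓ₂, t ∈ Ms ℓ₁ → t ∈ Ms ℓ₂ → ℓ₁ = ℓ₂ := by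
    intro t ℓ₁ ℓ₂ h1 h2
    by_contra hcon
    exact (Finset.disjoint_left.1 (hdisj ℓ₁ ℓ₂ hcon)) h1 h2
  let N : Finset (Fin k) := Finset.univ.filter fun t => ∃ ℓ, g ℓ = none ∧ t ∈ Ms ℓ
  let ρ' : Fin k → Λ := fun t => if h : ∃ ℓ, t ∈ Ms ℓ then (g h.choose).getD a0 else ρ t
  refine ⟨fun _ => N, ρ', ?_, ?_, c, ?_⟩
  · intro _
    rw [← hg0, Finset.card_pos] at hr
    obtain ⟨ℓ, hℓ⟩ := hr
    obtain ⟨t, ht⟩ := hne ℓ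
    exact ⟨t, by simpa [N] using ⟨ℓ, by simpa using hℓ, ht⟩⟩
  · intro ℓ₁ ℓ₂ h
    exact absurd (Subsingleton.elim _ _) h
  · rintro ν ⟨h1, h2⟩
    obtain ⟨a, ha⟩ := h2 0
    have hν : ∀ ℓ, ∀ t ∈ Ms ℓ, ν t = (g ℓ).getD a := by
      intro ℓ t ht
      cases hg : g ℓ with
      | none =>
        rw [ha t (by simpa [N] using ⟨ℓ, hg, ht⟩)]
        rfl
      | some b =>
        have hN : t ∉ N := by
          simp only [N, Finset.mem_filter, Finset.mem_univ, true_and]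
          rintro ⟨ℓ', hn, ht'⟩
          rw [huniq t ℓ' ℓ ht' ht, hg] at hn
          cases hn
        rw [h1 t (fun _ => hN)]
        have hex : ∃ ℓ, t ∈ Ms ℓ := ⟨ℓ, ht⟩
        simp only [ρ', dif_pos hex]
        rw [huniq t hex.choose ℓ hex.choose_spec ht, hg]
        rfl
    rw [hd' ν (Function.update ls a (ls a + r)) ⟨?_, ?_⟩ ?_, hc]
    · intro t ht
      have hN : t ∉ N := by
        simp only [N, Finset.mem_filter, Finset.mem_univ, true_and]
        rintro ⟨ℓ', _, ht'⟩
        exact ht ℓ' ht'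
      rw [h1 t (fun _ => hN)]
      have hex : ¬ ∃ ℓ, t ∈ Ms ℓ := fun ⟨ℓ, h⟩ => ht ℓ h
      simp only [ρ', dif_neg hex]
    · exact fun ℓ => ⟨_, hν ℓ⟩
    · intro α
      rw [← card_getD g r ls hg0 hg1 a α, blockCount]
      congr 1
      ext ℓ
      simp only [Finset.mem_filter, Finset.mem_univ, true_and]
      constructor
      · intro h
        obtain ⟨t, ht⟩ := hne ℓ
        rw [← hν ℓ t ht, h t ht]
      · intro h t ht
        rw [hν ℓ t ht, h]

/-- If the positive integer `m*` satisfies property `(⊕)`, then `hj_C(1, Λ) ≤ f^{8,*}_Λ(m*, C)`. -/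
theorem hj_le_f8Star_of_oplus (Λ C : Type*) [Fintype Λ] [DecidableEq Λ] [Nonempty Λ]
    [Fintype C] [Nonempty C] (mstar : ℕ) (hmstar : 0 < mstar)
    (hoplus : OplusProp Λ C mstar) :
    hjNum Λ C 1 ≤ f8Star Λ C mstar := by
  exact Nat.sInf_le (hjProp_of_f8StarProp Λ C mstar _ hoplus
    (Nat.sInf_mem (s := {k | F8StarProp Λ C mstar k}) (exists_f8StarProp Λ C mstar)))
end

section
/- Let Λ and C be finite non-empty sets. Then m* = |Λ|² · w_C(|Λ|, 1) satisfies property (⊕). -/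
open Finset

theorem gwProp_exists (C : Type*) [Finite C] (h : ℕ) : ∃ n, GWProp C h 1 n := by
  classical
  obtain ⟨ι, _, hι⟩ :=
    Combinatorics.Line.exists_mono_in_high_dimension (Fin h → Fin 2) C
  refine ⟨Fintype.card ι + 1, fun d => ?_⟩
  have bound : ∀ (v : ι → Fin h → Fin 2) (e : Fin h),
      ∑ i, (v i e).val < Fintype.card ι + 1 := by
    intro v e
    have : ∑ i, (v i e).val ≤ ∑ _i : ι, 1 :=
      Finset.sum_le_sum fun i _ => by have := (v i e).isLt; omega
    simp only [Finset.sum_const, Finset.card_univ, smul_eq_mul, mul_one] at this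
    omega
  obtain ⟨l, c, hl⟩ := hι fun v => d fun e => ⟨∑ i, (v i e).val, bound v e⟩
  let s : Finset ι := Finset.univ.filter fun i => l.idxFun i = none
  let z : Fin h → Fin 2 := fun _ => 0
  have key : ∀ (x : Fin h → Fin 2) (e : Fin h),
      ∑ i, (l x i e).val = ∑ i, (l z i e).val + s.card * (x e).val := by
    intro x e
    have h1 : s.card * (x e).val = ∑ i, if l.idxFun i = none then (x e).val else 0 := by
      rw [← Finset.sum_filter, Finset.sum_const, smul_eq_mul]
    rw [h1, ← Finset.sum_add_distrib]
    refine Finset.sum_congr rfl fun i _ => ?_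
    cases hi : l.idxFun i <;> simp [hi, z]
  refine ⟨s.card, ?_, fun e => ∑ i, (l z i e).val, ?_, c, ?_⟩
  · obtain ⟨i, hi⟩ := l.proper
    exact Finset.card_pos.mpr ⟨i, by simp [s, hi]⟩
  · intro e
    have := key (fun _ => 1) e
    have h2 := bound (l fun _ => 1) e
    rw [this] at h2
    simpa using h2
  · intro i hi hlt
    rw [← hl fun e => ⟨i e, by have := hi e; omega⟩]
    congr 1
    funext e
    apply Fin.ext
    exact (key (fun e => ⟨i e, by have := hi e; omega⟩) e).symm

/-- `m* = |Λ|² · w_C(|Λ|, 1)` satisfies property `(⊕)`. -/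
theorem oplus_of_gw (Λ C : Type*) [Fintype Λ] [DecidableEq Λ] [Nonempty Λ]
    [Fintype C] [Nonempty C] :
    OplusProp Λ C (Fintype.card Λ ^ 2 * gwNum C (Fintype.card Λ) 1) := by
  classical
  intro d
  obtain ⟨α0⟩ := (inferInstance : Nonempty Λ)
  have hgw : GWProp C (Fintype.card Λ) 1 (gwNum C (Fintype.card Λ) 1) :=
    Nat.sInf_mem (s := {n | GWProp C (Fintype.card Λ) 1 n}) (gwProp_exists C _)
  generalize gwNum C (Fintype.card Λ) 1 = n at hgw
  have e : Λ ≃ Fin (Fintype.card Λ) := Fintype.equivFin Λ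
  have hcard : 0 < Fintype.card Λ := Fintype.card_pos_iff.mpr ⟨α0⟩
  have hM : Fintype.card Λ * n ≤ Fintype.card Λ ^ 2 * n := by
    apply Nat.mul_le_mul_right
    nlinarith
  generalize Fintype.card Λ ^ 2 * n = M at hM
  obtain ⟨D, hD, ms, hms, c, hc⟩ := hgw fun x => d fun β =>
    if β = α0 then M - ∑ γ ∈ Finset.univ.erase α0, (x (e γ)).val else (x (e β)).val
  set S := ∑ γ ∈ Finset.univ.erase α0, ms (e γ) with hS
  have hle : S + D ≤ M := by
    have h1 : S ≤ ∑ γ ∈ Finset.univ.erase α0, n :=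
      Finset.sum_le_sum fun γ _ => by have := hms (e γ); omega
    rw [Finset.sum_const, Finset.card_erase_of_mem (Finset.mem_univ _), Finset.card_univ,
      smul_eq_mul] at h1
    have h2 : D ≤ n := by have := hms (e α0); omega
    have h3 : (Fintype.card Λ - 1) * n + n = Fintype.card Λ * n := by
      conv_rhs => rw [← Nat.sub_add_cancel hcard]
      ring
    omega
  let ls : Λ → ℕ := fun β => if β = α0 then M - S - D else ms (e β)
  have hls0 : ls α0 = M - S - D := if_pos rfl
  have hls : ∀ β, β ≠ α0 → ls β = ms (e β) := fun β h => if_neg h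
  have hsum : ∑ β, ls β = M - D := by
    rw [← Finset.add_sum_erase _ _ (Finset.mem_univ α0), hls0,
      Finset.sum_congr rfl fun β hβ => hls β (Finset.ne_of_mem_erase hβ), ← hS]
    omega
  refine ⟨D, hD, ls, fun α => ?_, c, fun α => ?_⟩
  · have h1 := Finset.add_sum_erase Finset.univ ls (Finset.mem_univ α)
    rw [Finset.sum_update_of_mem (Finset.mem_univ α), Finset.sdiff_singleton_eq_erase]
    omega
  · have hi : ∀ k, (fun k => if α ≠ α0 ∧ k = e α then 1 else 0 :
        Fin (Fintype.card Λ) → ℕ) k ≤ 1 := by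
      intro k; dsimp only; split_ifs <;> omega
    rw [← hc _ hi fun k => lt_of_le_of_lt
      (Nat.add_le_add_left (Nat.mul_le_mul_left D (hi k)) _) (hms k)]
    congr 1
    funext β
    by_cases hα : α = α0
    · subst hα
      by_cases hβ : β = α
      · subst hβ
        simp only [Function.update_self, hls0, ne_eq, not_true_eq_false, false_and, if_true,
          if_false, mul_zero, add_zero, ← hS]
        omega
      · simp [hβ, hls β hβ]
    · by_cases hβ : β = α0
      · subst hβ
        have hsum2 : ∑ γ ∈ Finset.univ.erase β,
            (ms (e γ) + D * if α ≠ β ∧ e γ = e α then 1 else 0) = S + D := by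
          rw [Finset.sum_add_distrib, ← hS]
          simp [hα]
        rw [Function.update_of_ne (Ne.symm hα), hls0, if_pos rfl, hsum2]
        omega
      · by_cases hβα : β = α
        · subst hβα
          simp [hls β hβ, hβ]
        · simp [hls β hβ, hβ, hβα]
end
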